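/- Let s ∈ (0,1) and let T_s : [0,1] → [0,1] be the Manneville–Pomeau map T_s(x) = x(1 + x^s) mod 1, so that T_s(x) = x + x^{1+s} for x close to 0, and let U_s : [0,1] → [0,c] denote the inverse branch of T_s restricted to [0,c], where c ∈ (0,1) is the unique point with T_s(c) = 1. Let ω_{α,β} be the concave modulus with ω_{α,β}(h) = h^α(−log h)^{−β} for small h > 0, where either α ∈ [0, min{s,1}) and β ≥ 0 with α + β > 0, or α = s and β = 0. Then there exist functions f, g ∈ C^{ω_{α,β}}([0,1]) which do not admit continuous sub-actions with respect to T_s and U_s, respectively. -/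

import Mathlib

open MeasureTheory Set Filter Topology Real

noncomputable section

/-- A `T`-invariant Borel probability measure concentrated on `[0,1]`. -/
def InvariantProb (T : ℝ → ℝ) (μ : Measure ℝ) : Prop :=
  IsProbabilityMeasure μ ∧ μ (Set.Icc 0 1) = 1 ∧ μ.map T = μ

/-- The maximum ergodic average `m(f,T)` over invariant probability measures on `[0,1]`. -/
noncomputable def ergMax (T f : ℝ → ℝ) : ℝ :=
  sSup {r : ℝ | ∃ μ : Measure ℝ, InvariantProb T μ ∧ r = ∫ x, f x ∂μ}

/-- `u` is a sub-action for `f` with respect to `T`. -/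
def IsSubaction (T f u : ℝ → ℝ) : Prop :=
  ∀ x ∈ Set.Icc (0:ℝ) 1, f x + u x - u (T x) ≤ ergMax T f

/-- `f` belongs to `C^ω([0,1])`: a multiple of `ω` is a modulus of continuity for `f`. -/
def MemCmod (ω f : ℝ → ℝ) : Prop :=
  ∃ C > (0:ℝ), ∀ x ∈ Set.Icc (0:ℝ) 1, ∀ y ∈ Set.Icc (0:ℝ) 1, |f x - f y| ≤ C * ω |x - y|

/-- A concave modulus of continuity. -/
def ConcaveModulus (ω : ℝ → ℝ) : Prop :=
  ContinuousOn ω (Set.Ici 0) ∧ MonotoneOn ω (Set.Ici 0) ∧ ω 0 = 0 ∧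
    (∀ x, 0 ≤ x → 0 ≤ ω x) ∧ ConcaveOn ℝ (Set.Ici 0) ω

/-- `V` is regularly varying at `0` with index `σ`. -/
def RegVary0 (V : ℝ → ℝ) (σ : ℝ) : Prop :=
  ∀ t > (0:ℝ), Tendsto (fun x => V (t * x) / V x) (𝓝[>] 0) (𝓝 (t ^ σ))

/-- The modulus of continuity `ω_{α,β}`: `h^α (-log h)^{-β}` for `0 < h < h₀`, constant
for `h ≥ h₀`, and vanishing at `0`. -/
noncomputable def omegaAB (α β h₀ : ℝ) : ℝ → ℝ := fun h =>
  if h ≤ 0 then 0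
  else if h < h₀ then h ^ α * (-Real.log h) ^ (-β)
  else h₀ ^ α * (-Real.log h₀) ^ (-β)

/-- The bounded transfer function, oscillating at `0`. -/
def VV (s : ℝ) (x : ℝ) : ℝ := Real.sin (s * Real.log x)

/-- The coboundary in the variable `y = x ^ s`. -/
def GG (s : ℝ) (y : ℝ) : ℝ :=
  Real.sin (Real.log y + s * Real.log (1 + y)) - Real.sin (Real.log y)

lemma GG_eq (s x : ℝ) (hx : 0 < x) : GG s (x ^ s) = VV s (x * (1 + x ^ s)) - VV s x := by
  have h : 0 < x ^ s := Real.rpow_pos_of_pos hx s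
  unfold GG VV
  rw [Real.log_rpow hx, Real.log_mul hx.ne' (by positivity), mul_add]

lemma GG_zero (s : ℝ) : GG s 0 = 0 := by simp [GG]

lemma abs_sin_sub (a b : ℝ) : |Real.sin a - Real.sin b| ≤ |a - b| := by
  have h := Real.lipschitzWith_sin.dist_le_mul a b
  simpa [Real.dist_eq] using h

lemma abs_cos_sub (a b : ℝ) : |Real.cos a - Real.cos b| ≤ |a - b| := by
  have h := Real.lipschitzWith_cos.dist_le_mul a b
  simpa [Real.dist_eq] using h

lemma log_one_add_le (y : ℝ) (hy : 0 < y) : Real.log (1 + y) ≤ y := by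
  have := Real.log_le_sub_one_of_pos (show 0 < 1 + y by linarith)
  linarith

lemma GG_lip (s : ℝ) (hs : s ∈ Ioo (0:ℝ) 1) (a b : ℝ) (ha : 0 ≤ a) (hb : 0 ≤ b) :
    |GG s a - GG s b| ≤ 2 * |a - b| := by
  have hs0 := hs.1
  have hs1 := hs.2
  have key0 : ∀ y : ℝ, 0 < y → |GG s y| ≤ 2 * y := by
    intro y hy
    have h1 := abs_sin_sub (Real.log y + s * Real.log (1 + y)) (Real.log y)
    have h2 := log_one_add_le y hy
    have h3 : 0 ≤ Real.log (1 + y) := Real.log_nonneg (by linarith)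
    have h4 : |Real.log y + s * Real.log (1 + y) - Real.log y| = s * Real.log (1 + y) := by
      rw [add_sub_cancel_left, abs_of_nonneg (by positivity)]
    rw [h4] at h1
    unfold GG
    nlinarith
  rcases ha.eq_or_lt with rfl | ha
  · rcases hb.eq_or_lt with rfl | hb
    · simp
    · have := key0 b hb
      rw [GG_zero]
      simpa [abs_of_pos hb] using this
  rcases hb.eq_or_lt with rfl | hb
  · have := key0 a ha
    rw [GG_zero]
    simpa [abs_of_pos ha] using this
  have hd : ∀ y ∈ Ioi (0:ℝ), HasDerivWithinAt (GG s)
      (Real.cos (Real.log y + s * Real.log (1 + y)) * (y⁻¹ + s * (1 / (1 + y)))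
        - Real.cos (Real.log y) * y⁻¹) (Ioi 0) y := by
    intro y hy
    have hy' : 0 < y := hy
    have e1 : HasDerivAt Real.log y⁻¹ y := Real.hasDerivAt_log hy'.ne'
    have e2 : HasDerivAt (fun y : ℝ => Real.log (1 + y)) (1 / (1 + y)) y :=
      ((hasDerivAt_id y).const_add 1).log (by simp; linarith)
    exact (((e1.add (e2.const_mul s)).sin).sub e1.sin).hasDerivWithinAt
  have hbd : ∀ y ∈ Ioi (0:ℝ),
      ‖Real.cos (Real.log y + s * Real.log (1 + y)) * (y⁻¹ + s * (1 / (1 + y)))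
        - Real.cos (Real.log y) * y⁻¹‖ ≤ 2 := by
    intro y hy
    have hy' : 0 < y := hy
    have h1 := abs_cos_sub (Real.log y + s * Real.log (1 + y)) (Real.log y)
    have h2 := log_one_add_le y hy
    have h3 : 0 ≤ Real.log (1 + y) := Real.log_nonneg (by linarith)
    have h4 : |Real.log y + s * Real.log (1 + y) - Real.log y| = s * Real.log (1 + y) := by
      rw [add_sub_cancel_left, abs_of_nonneg (by positivity)]
    rw [h4] at h1
    set A := Real.cos (Real.log y + s * Real.log (1 + y)) with hA
    set B := Real.cos (Real.log y)
    have h5 : A * (y⁻¹ + s * (1 / (1 + y))) - B * y⁻¹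
        = (A - B) * y⁻¹ + A * (s * (1 / (1 + y))) := by ring
    rw [h5, Real.norm_eq_abs]
    have h6 : |(A - B) * y⁻¹| ≤ 1 := by
      rw [abs_mul, abs_of_pos (inv_pos.mpr hy'), ← div_eq_mul_inv, div_le_one hy']
      nlinarith
    have h7 : |A * (s * (1 / (1 + y)))| ≤ 1 := by
      rw [abs_mul]
      have h8 : |A| ≤ 1 := Real.abs_cos_le_one _
      have h9 : |s * (1 / (1 + y))| ≤ 1 := by
        rw [abs_of_nonneg (by positivity), mul_one_div, div_le_one (by linarith)]
        linarith
      exact mul_le_one₀ h8 (abs_nonneg _) h9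
    linarith [abs_add_le ((A - B) * y⁻¹) (A * (s * (1 / (1 + y))))]
  have := (convex_Ioi (0:ℝ)).norm_image_sub_le_of_norm_hasDerivWithin_le hd hbd
    (show b ∈ Ioi (0:ℝ) from hb) (show a ∈ Ioi (0:ℝ) from ha)
  simpa [Real.norm_eq_abs] using this

lemma rpow_holder (s : ℝ) (hs : s ∈ Ioo (0:ℝ) 1) (a b : ℝ) (ha : 0 ≤ a) (hb : 0 ≤ b) :
    |a ^ s - b ^ s| ≤ |a - b| ^ s := by
  wlog h : b ≤ a generalizing a b
  · rw [abs_sub_comm, abs_sub_comm a b]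
    exact this b a hb ha (le_of_not_ge h)
  rw [abs_of_nonneg (sub_nonneg.mpr (Real.rpow_le_rpow hb h hs.1.le)),
    abs_of_nonneg (sub_nonneg.mpr h)]
  have := Real.rpow_add_le_add_rpow (sub_nonneg.mpr h) hb hs.1.le hs.2.le
  rw [sub_add_cancel] at this
  linarith

lemma GG_holder (s : ℝ) (hs : s ∈ Ioo (0:ℝ) 1) (a b : ℝ) (ha : 0 ≤ a) (hb : 0 ≤ b) :
    |GG s (a ^ s) - GG s (b ^ s)| ≤ 2 * |a - b| ^ s :=
  (GG_lip s hs _ _ (Real.rpow_nonneg ha s) (Real.rpow_nonneg hb s)).trans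
    (by linarith [rpow_holder s hs a b ha hb])

lemma omega_lower (s : ℝ) (hs : s ∈ Ioo (0:ℝ) 1) (α β h₀ : ℝ) (hh₀ : h₀ ∈ Ioo (0:ℝ) 1)
    (hαβ : (0 ≤ α ∧ α < min s 1 ∧ 0 ≤ β ∧ 0 < α + β) ∨ (α = s ∧ β = 0)) :
    ∃ C > (0:ℝ), ∀ h, 0 ≤ h → h ≤ 1 → h ^ s ≤ C * omegaAB α β h₀ h := by
  have hsmall : ∃ C > (0:ℝ), ∀ h, 0 < h → h < 1 →
      h ^ s ≤ C * (h ^ α * (-Real.log h) ^ (-β)) := by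
    rcases hαβ with ⟨_, hα, hβ, _⟩ | ⟨rfl, rfl⟩
    · have hα' : 0 < s - α := sub_pos.mpr (lt_of_lt_of_le hα (min_le_left _ _))
      set ε := (s - α) / (β + 1) with hε
      have hε0 : 0 < ε := by positivity
      refine ⟨(ε ^ β)⁻¹, by positivity, fun h h0 h1 => ?_⟩
      have hL : 0 < -Real.log h := by linarith [Real.log_neg h0 h1]
      have hle : -Real.log h ≤ h ^ (-ε) / ε := by
        have := Real.log_le_rpow_div (inv_nonneg.mpr h0.le) hε0
        rwa [Real.log_inv, Real.inv_rpow h0.le, ← Real.rpow_neg h0.le] at this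
      have h2 : (-Real.log h) ^ β ≤ h ^ (-(s - α)) * (ε ^ β)⁻¹ := by
        calc (-Real.log h) ^ β ≤ (h ^ (-ε) / ε) ^ β := Real.rpow_le_rpow hL.le hle hβ
          _ = h ^ (-ε * β) * (ε ^ β)⁻¹ := by
            rw [Real.div_rpow (by positivity) hε0.le, ← Real.rpow_mul h0.le, div_eq_mul_inv]
          _ ≤ h ^ (-(s - α)) * (ε ^ β)⁻¹ := by
            gcongr ?_ * _
            apply Real.rpow_le_rpow_of_exponent_ge h0 h1.le
            have : ε * (β + 1) = s - α := by rw [hε]; field_simp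
            nlinarith
      rw [Real.rpow_neg hL.le]
      have hLb : 0 < (-Real.log h) ^ β := Real.rpow_pos_of_pos hL β
      have h3 : h ^ s = h ^ α * h ^ (s - α) := by rw [← Real.rpow_add h0]; ring_nf
      have h4 : h ^ (s - α) * h ^ (-(s - α)) = 1 := by
        rw [← Real.rpow_add h0]; simp
      have h5 : h ^ (s - α) * (-Real.log h) ^ β ≤ (ε ^ β)⁻¹ := by
        calc _ ≤ h ^ (s - α) * (h ^ (-(s - α)) * (ε ^ β)⁻¹) := by gcongr
          _ = _ := by rw [← mul_assoc, h4, one_mul]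
      rw [h3]
      have h6 : h ^ (s - α) ≤ (ε ^ β)⁻¹ * ((-Real.log h) ^ β)⁻¹ := by
        rw [← div_eq_mul_inv, le_div_iff₀ hLb]; exact h5
      calc h ^ α * h ^ (s - α) ≤ h ^ α * ((ε ^ β)⁻¹ * ((-Real.log h) ^ β)⁻¹) := by gcongr
        _ = _ := by ring
    · exact ⟨1, one_pos, fun h h0 h1 => by simp⟩
  obtain ⟨C, hC, hCl⟩ := hsmall
  set D := h₀ ^ α * (-Real.log h₀) ^ (-β) with hD
  have hD0 : 0 < D := by
    have : 0 < -Real.log h₀ := by linarith [Real.log_neg hh₀.1 hh₀.2]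
    have := hh₀.1
    positivity
  refine ⟨max C D⁻¹, by positivity, fun h h0 h1 => ?_⟩
  unfold omegaAB
  split_ifs with c1 c2
  · have : h = 0 := le_antisymm c1 h0
    simp [this, Real.zero_rpow hs.1.ne']
  · have c1 := not_le.mp c1
    have hh : h < 1 := c2.trans hh₀.2
    have : 0 < -Real.log h := by linarith [Real.log_neg c1 hh]
    refine (hCl h c1 hh).trans ?_
    gcongr
    exact le_max_left _ _
  · calc h ^ s ≤ 1 := Real.rpow_le_one h0 h1 hs.1.le
      _ = D⁻¹ * D := by field_simp
      _ ≤ _ := by gcongr; exact le_max_right _ _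

lemma ergMax_nonpos (T f V : ℝ → ℝ) (hV : Measurable V) (hb : ∀ x, |V x| ≤ 1)
    (h : ∀ x ∈ Icc (0:ℝ) 1, f x ≤ V (T x) - V x) : ergMax T f ≤ 0 := by
  apply Real.sSup_nonpos
  rintro r ⟨μ, ⟨hp, h1, hm⟩, rfl⟩
  by_cases hf : Integrable f μ
  swap
  · rw [integral_undef hf]
  have hT : AEMeasurable T μ := by
    by_contra hn
    rw [Measure.map_of_not_aemeasurable hn] at hm
    exact IsProbabilityMeasure.ne_zero μ hm.symm
  have hVi : Integrable V μ :=
    Integrable.of_bound hV.aestronglyMeasurable 1 (Eventually.of_forall hb)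
  have hVT : Integrable (fun x => V (T x)) μ :=
    Integrable.of_bound (hV.comp_aemeasurable hT).aestronglyMeasurable 1
      (Eventually.of_forall fun x => hb _)
  have hae : ∀ᵐ x ∂μ, x ∈ Icc (0:ℝ) 1 := by
    rw [← prob_compl_eq_zero_iff measurableSet_Icc] at h1
    exact h1
  have h2 : ∫ x, f x ∂μ ≤ ∫ x, (V (T x) - V x) ∂μ :=
    integral_mono_ae hf (hVT.sub hVi) (hae.mono fun x hx => h x hx)
  have h3 : ∫ x, V (T x) ∂μ = ∫ x, V x ∂μ := by
    conv_rhs => rw [← hm]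
    exact (integral_map hT hV.aestronglyMeasurable).symm
  rw [integral_sub hVT hVi, h3, sub_self] at h2
  exact h2

lemma VV_meas (s : ℝ) : Measurable (VV s) := by
  unfold VV; fun_prop

lemma VV_bd (s x : ℝ) : |VV s x| ≤ 1 := Real.abs_sin_le_one _

/-- Orbit segments near `0` along which `VV` rises from `-1` to a nonnegative value. -/
lemma exists_orbit (s : ℝ) (hs : s ∈ Ioo (0:ℝ) 1) (δ : ℝ) (hδ : 0 < δ) :
    ∃ (x : ℕ → ℝ) (n : ℕ), (∀ k, 0 < x k) ∧ (∀ k ≤ n, x k ≤ δ) ∧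
      (∀ k, x (k + 1) = x k * (1 + x k ^ s)) ∧ VV s (x 0) = -1 ∧ 0 ≤ VV s (x n) := by
  wlog hδ1 : δ ≤ 1 generalizing δ
  · obtain ⟨x, n, h1, h2, h3⟩ := this 1 one_pos le_rfl
    exact ⟨x, n, h1, fun k hk => (h2 k hk).trans (le_of_not_ge hδ1), h3⟩
  have hs0 := hs.1
  obtain ⟨N, hN⟩ := exists_nat_gt (-(s * Real.log δ) + 2)
  have hpi := Real.pi_gt_three
  have hpi4 := Real.pi_le_four
  have hN0 : (0:ℝ) ≤ N := Nat.cast_nonneg N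
  set z := Real.exp ((Real.pi / 2 - N * (2 * Real.pi)) / s) with hz
  set x0 := Real.exp ((-(Real.pi / 2) - N * (2 * Real.pi)) / s) with hx0
  have hzδ : z ≤ δ := by
    rw [hz, ← Real.le_log_iff_exp_le hδ, div_le_iff₀ hs0]
    nlinarith
  have hx0z : x0 ≤ z := by
    rw [hx0, hz, Real.exp_le_exp]
    gcongr
    linarith
  have hx0p : 0 < x0 := Real.exp_pos _
  have hzlog : s * Real.log z = Real.pi / 2 - N * (2 * Real.pi) := by
    rw [hz, Real.log_exp]; field_simp
  have hx0log : s * Real.log x0 = -(Real.pi / 2) - N * (2 * Real.pi) := by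
    rw [hx0, Real.log_exp]; field_simp
  let x : ℕ → ℝ := fun n => Nat.rec x0 (fun _ y => y * (1 + y ^ s)) n
  have hx_zero : x 0 = x0 := rfl
  have hx_succ : ∀ k, x (k + 1) = x k * (1 + x k ^ s) := fun k => rfl
  have hlow : ∀ k, x0 * (1 + x0 ^ s) ^ k ≤ x k := by
    intro k
    induction k with
    | zero => simp [hx_zero]
    | succ k ih =>
      have h1 : x0 ≤ x k := by
        refine le_trans ?_ ih
        have : (1:ℝ) ≤ (1 + x0 ^ s) ^ k := one_le_pow₀ (by
          have : 0 < x0 ^ s := Real.rpow_pos_of_pos hx0p s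
          linarith)
        nlinarith
      have h2 : x0 ^ s ≤ x k ^ s := Real.rpow_le_rpow hx0p.le h1 hs0.le
      rw [hx_succ, pow_succ, ← mul_assoc]
      have : 0 < x0 ^ s := Real.rpow_pos_of_pos hx0p s
      have : 0 < x k := hx0p.trans_le h1
      gcongr
  have hxp : ∀ k, 0 < x k := fun k => by
    refine lt_of_lt_of_le ?_ (hlow k)
    positivity
  have hex : ∃ k, z < x k := by
    have h1 : 1 < 1 + x0 ^ s := by
      have : 0 < x0 ^ s := Real.rpow_pos_of_pos hx0p s
      linarith
    obtain ⟨k, hk⟩ := pow_unbounded_of_one_lt (z / x0) h1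
    refine ⟨k, lt_of_lt_of_le ?_ (hlow k)⟩
    rw [div_lt_iff₀ hx0p] at hk
    linarith
  obtain ⟨m, hm, hmin⟩ : ∃ m, z < x m ∧ ∀ k < m, x k ≤ z := by
    classical
    exact ⟨Nat.find hex, Nat.find_spec hex, fun k hk => not_lt.mp (Nat.find_min hex hk)⟩
  obtain ⟨n, rfl⟩ : ∃ n, m = n + 1 := by
    refine Nat.exists_eq_succ_of_ne_zero ?_
    rintro rfl
    rw [hx_zero] at hm
    linarith
  refine ⟨x, n, hxp, fun k hk => (hmin k (by omega)).trans hzδ, hx_succ, ?_, ?_⟩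
  · unfold VV
    rw [hx_zero, hx0log, Real.sin_sub_nat_mul_two_pi, Real.sin_neg, Real.sin_pi_div_two]
  · have hn : x n ≤ z := hmin n (by omega)
    have hpn := hxp n
    have hps : 0 < x n ^ s := Real.rpow_pos_of_pos hpn s
    have h1 : x n ^ s ≤ 1 := Real.rpow_le_one hpn.le (by linarith) hs0.le
    have hl1 : Real.log (x n) ≤ Real.log z := Real.log_le_log hpn hn
    have hl2 : Real.log z ≤ Real.log (x n) + 1 := by
      have h2 : Real.log z ≤ Real.log (x (n + 1)) := Real.log_le_log (by linarith) hm.le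
      rw [hx_succ, Real.log_mul hpn.ne' (by positivity)] at h2
      linarith [log_one_add_le _ hps]
    have h3 := abs_sin_sub (s * Real.log z) (s * Real.log (x n))
    have h4 : Real.sin (s * Real.log z) = 1 := by
      rw [hzlog, Real.sin_sub_nat_mul_two_pi, Real.sin_pi_div_two]
    have h5 : |s * Real.log z - s * Real.log (x n)| ≤ 1 := by
      rw [abs_le]
      constructor <;> nlinarith [hs.2]
    unfold VV
    rw [h4] at h3
    linarith [le_abs_self (1 - Real.sin (s * Real.log (x n)))]

lemma no_cont (s : ℝ) (hs : s ∈ Ioo (0:ℝ) 1) (d : ℝ) (hd : 0 < d) (hd1 : d ≤ 1) (u : ℝ → ℝ)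
    (hu : ContinuousOn u (Icc 0 1))
    (h : ∀ x, 0 < x → x ≤ d → x * (1 + x ^ s) ≤ 1 →
      u x - VV s x ≤ u (x * (1 + x ^ s)) - VV s (x * (1 + x ^ s))) : False := by
  have hc := Metric.continuousWithinAt_iff.mp (hu 0 ⟨le_rfl, zero_le_one⟩) (1/4) (by norm_num)
  obtain ⟨δ, hδ, hδu⟩ := hc
  obtain ⟨x, n, hp, hle, hsucc, h0, hn⟩ := exists_orbit s hs (min (δ / 2) d) (by positivity)
  have hmono : ∀ k ≤ n, u (x 0) - VV s (x 0) ≤ u (x k) - VV s (x k) := by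
    intro k
    induction k with
    | zero => intro _; exact le_rfl
    | succ k ih =>
      intro hk
      have h1 := ih (by omega)
      have h2 := (hle k (by omega)).trans (min_le_right _ _)
      have h3 := (hle (k + 1) hk).trans (min_le_right _ _)
      rw [hsucc] at h3 ⊢
      exact h1.trans (h _ (hp k) h2 (h3.trans hd1))
  have hnear : ∀ k ≤ n, |u (x k) - u 0| < 1 / 4 := by
    intro k hk
    have h1 := (hle k hk).trans (min_le_right _ _)
    have h2 := (hle k hk).trans (min_le_left _ _)
    have := hδu (x := x k) ⟨(hp k).le, h1.trans hd1⟩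
      (by rw [Real.dist_eq, sub_zero, abs_of_pos (hp k)]; linarith)
    rwa [Real.dist_eq] at this
  have a := abs_lt.mp (hnear 0 (Nat.zero_le n))
  have b := abs_lt.mp (hnear n le_rfl)
  have e := hmono n le_rfl
  rw [h0] at e
  linarith [a.1, a.2, b.1, b.2]

theorem manneville_pomeau_no_continuous_subaction
    (s : ℝ) (hs : s ∈ Ioo (0:ℝ) 1)
    (c : ℝ) (hc : c ∈ Ioo (0:ℝ) 1) (hc1 : c * (1 + c ^ s) = 1)
    (hcuniq : ∀ c' ∈ Ioo (0:ℝ) 1, c' * (1 + c' ^ s) = 1 → c' = c)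
    (T U : ℝ → ℝ)
    (hTmaps : MapsTo T (Icc 0 1) (Icc 0 1))
    (hT : ∀ x ∈ Icc (0:ℝ) 1, T x = if x ≤ c then x * (1 + x ^ s) else x * (1 + x ^ s) - 1)
    (hUmaps : MapsTo U (Icc 0 1) (Icc 0 c))
    (hTU : ∀ x ∈ Icc (0:ℝ) 1, T (U x) = x)
    (hUT : ∀ x ∈ Icc (0:ℝ) c, U (T x) = x)
    (α β h₀ : ℝ) (hh₀ : h₀ ∈ Ioo (0:ℝ) 1)
    (hconc : ConcaveModulus (omegaAB α β h₀))
    (hαβ : (0 ≤ α ∧ α < min s 1 ∧ 0 ≤ β ∧ 0 < α + β) ∨ (α = s ∧ β = 0)) :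
    ∃ f g : ℝ → ℝ, MemCmod (omegaAB α β h₀) f ∧ MemCmod (omegaAB α β h₀) g ∧
      (¬ ∃ u : ℝ → ℝ, ContinuousOn u (Icc 0 1) ∧ IsSubaction T f u) ∧
      (¬ ∃ u : ℝ → ℝ, ContinuousOn u (Icc 0 1) ∧ IsSubaction U g u) := by
  obtain ⟨C, hC, hCω⟩ := omega_lower s hs α β h₀ hh₀ hαβ
  have hc0 := hc.1
  have hTc : ∀ x, 0 ≤ x → x ≤ c → T x = x * (1 + x ^ s) := fun x h0 h1 => by
    rw [hT x ⟨h0, by linarith [hc.2]⟩, if_pos h1]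
  have hGT : ∀ x, 0 ≤ x → x ≤ c → GG s (x ^ s) = VV s (T x) - VV s x := by
    intro x h0 h1
    rw [hTc x h0 h1]
    rcases h0.eq_or_lt with rfl | h0
    · simp [Real.zero_rpow hs.1.ne', GG_zero]
    · exact GG_eq s x h0
  have hUeq : ∀ x ∈ Icc (0:ℝ) 1, U x * (1 + U x ^ s) = x := fun x hx => by
    rw [← hTc (U x) (hUmaps hx).1 (hUmaps hx).2, hTU x hx]
  have hUmono : ∀ x ∈ Icc (0:ℝ) 1, ∀ y ∈ Icc (0:ℝ) 1, |U x - U y| ≤ |x - y| := by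
    intro x hx y hy
    wlog h : U y ≤ U x generalizing x y
    · rw [abs_sub_comm, abs_sub_comm x y]
      exact this y hy x hx (le_of_not_ge h)
    rw [abs_of_nonneg (sub_nonneg.mpr h)]
    refine le_trans ?_ (le_abs_self _)
    have hx' := hUeq x hx
    have hy' := hUeq y hy
    have h1 : U y ^ s ≤ U x ^ s := Real.rpow_le_rpow (hUmaps hy).1 h hs.1.le
    have h2 : U y * U y ^ s ≤ U x * U x ^ s :=
      mul_le_mul h h1 (Real.rpow_nonneg (hUmaps hy).1 s) (hUmaps hx).1
    nlinarith
  have habs : ∀ x ∈ Icc (0:ℝ) 1, ∀ y ∈ Icc (0:ℝ) 1, |x - y| ≤ 1 := by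
    intro x hx y hy
    rw [abs_le]
    constructor <;> linarith [hx.1, hx.2, hy.1, hy.2]
  refine ⟨fun x => GG s (x ^ s) - 8 / c * max (x - c / 2) 0, fun x => GG s (U x ^ s),
    ⟨(2 + 8 / c) * C, by positivity, ?_⟩, ⟨2 * C, by positivity, ?_⟩, ?_, ?_⟩
  · intro x hx y hy
    have h1 := GG_holder s hs x y hx.1 hy.1
    have h2 : |max (x - c / 2) 0 - max (y - c / 2) 0| ≤ |x - y| := by
      have := abs_max_sub_max_le_abs (x - c / 2) (y - c / 2) 0
      simpa using this
    have h3 : |x - y| ≤ |x - y| ^ s := by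
      have := Real.rpow_le_rpow_of_exponent_ge' (abs_nonneg (x - y)) (habs x hx y hy)
        hs.1.le hs.2.le
      simpa using this
    have h4 := hCω _ (abs_nonneg (x - y)) (habs x hx y hy)
    have hK : 0 < 8 / c := by positivity
    calc |GG s (x ^ s) - 8 / c * max (x - c / 2) 0 - (GG s (y ^ s) - 8 / c * max (y - c / 2) 0)|
        = |(GG s (x ^ s) - GG s (y ^ s)) -
            8 / c * (max (x - c / 2) 0 - max (y - c / 2) 0)| := by ring_nf
      _ ≤ |GG s (x ^ s) - GG s (y ^ s)| +
            |8 / c * (max (x - c / 2) 0 - max (y - c / 2) 0)| := abs_sub _ _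
      _ ≤ 2 * |x - y| ^ s + 8 / c * |x - y| ^ s := by
          rw [abs_mul, abs_of_pos hK]
          gcongr
          exact h2.trans h3
      _ = (2 + 8 / c) * |x - y| ^ s := by ring
      _ ≤ (2 + 8 / c) * (C * omegaAB α β h₀ |x - y|) := by gcongr
      _ = _ := by ring
  · intro x hx y hy
    have h1 := GG_holder s hs (U x) (U y) (hUmaps hx).1 (hUmaps hy).1
    have h2 : |U x - U y| ^ s ≤ |x - y| ^ s :=
      Real.rpow_le_rpow (abs_nonneg _) (hUmono x hx y hy) hs.1.le
    have h4 := hCω _ (abs_nonneg (x - y)) (habs x hx y hy)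
    rw [mul_assoc]
    linarith
  · rintro ⟨u, hu, hsub⟩
    have herg : ergMax T (fun x => GG s (x ^ s) - 8 / c * max (x - c / 2) 0) ≤ 0 := by
      apply ergMax_nonpos T _ (VV s) (VV_meas s) (VV_bd s)
      intro x hx
      by_cases hxc : x ≤ c
      · rw [hGT x hx.1 hxc]
        have : 0 ≤ 8 / c * max (x - c / 2) 0 := by positivity
        linarith
      · have hxc := not_le.mp hxc
        have h1 : 4 ≤ 8 / c * max (x - c / 2) 0 := by
          calc (4:ℝ) = 8 / c * (c / 2) := by field_simp; norm_num
            _ ≤ _ := by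
              gcongr
              exact le_trans (by linarith) (le_max_left _ _)
        rw [GG_eq s x (hc0.trans hxc)]
        have a1 := abs_le.mp (VV_bd s (x * (1 + x ^ s)))
        have a2 := abs_le.mp (VV_bd s (T x))
        linarith [a1.2, a2.1]
    refine no_cont s hs (c / 2) (by linarith) (by linarith [hc.2]) u hu ?_
    intro x h0 hxd h1
    have hx1 : x ≤ 1 := by linarith [hc.2]
    have h2 := (hsub x ⟨h0.le, hx1⟩).trans herg
    have h3 : max (x - c / 2) 0 = 0 := max_eq_right (by linarith)
    simp only [h3] at h2
    rw [hTc x h0.le (by linarith), GG_eq s x h0] at h2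
    linarith
  · rintro ⟨u, hu, hsub⟩
    have hg : ∀ x ∈ Icc (0:ℝ) 1, GG s (U x ^ s) = VV s x - VV s (U x) := fun x hx => by
      rw [hGT (U x) (hUmaps hx).1 (hUmaps hx).2, hTU x hx]
    have herg : ergMax U (fun x => GG s (U x ^ s)) ≤ 0 := by
      apply ergMax_nonpos U _ (fun x => - VV s x) (VV_meas s).neg
        (fun x => by rw [abs_neg]; exact VV_bd s x)
      intro x hx
      rw [hg x hx]
      linarith
    -- here `-u` plays the role of a sub-action
    refine no_cont s hs c hc0 hc.2.le (fun x => - u x) hu.neg ?_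
    intro x h0 hxc h1
    have h2 := hTc x h0.le hxc
    have hy : T x ∈ Icc (0:ℝ) 1 := hTmaps ⟨h0.le, by linarith [hc.2]⟩
    have h3 := (hsub (T x) hy).trans herg
    simp only [hUT x ⟨h0.le, hxc⟩, hGT x h0.le hxc] at h3
    rw [← h2]
    linarith

end
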